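/- arXiv:1003.5368 — 2 statements merged into one kernel-verified Lean document; each statement's English description precedes it below -/
import Mathlib

section
/- The polynomial p_{d+1} equals ∏_{i=0}^d (λ − θ_{t+i}) and is both the minimal polynomial and the characteristic polynomial of the restriction of A to W; dually, p*_{d+1} equals ∏_{i=0}^d (λ − θ*_{r+i}) and is both the minimal polynomial and the characteristic polynomial of the restriction of A* to W. -/
open Matrix
open scoped Classical

noncomputable section

/-- The full setup: a `Q`-polynomial distance-regular graph `Γ = (X,R)` of diameter `D ≥ 3`,
with adjacency matrix `A`, primitive idempotents `E_i`, eigenvalues `θ_i`,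
Krein parameters `q^h_{ij}`, a fixed base vertex `x`, dual primitive idempotents `E*_i`,
dual adjacency matrix `A*` and dual eigenvalues `θ*_i`. -/
structure TSetup (X : Type*) [Fintype X] [DecidableEq X] where
  G : SimpleGraph X
  hGconn : G.Connected
  D : ℕ
  hD3 : 3 ≤ D
  hDiamLe : ∀ y z : X, G.dist y z ≤ D
  hDiamEq : ∃ y z : X, G.dist y z = D
  p : ℕ → ℕ → ℕ → ℕ
  hDRG : ∀ h i j : ℕ, h ≤ D → i ≤ D → j ≤ D → ∀ y z : X, G.dist y z = h →
    Nat.card {w : X // G.dist y w = i ∧ G.dist z w = j} = p h i j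
  A : Matrix X X ℂ
  hA : ∀ y z : X, A y z = if G.Adj y z then 1 else 0
  E : ℕ → Matrix X X ℂ
  hEzero : ∀ i : ℕ, D < i → E i = 0
  hEsum : ∑ i ∈ Finset.range (D + 1), E i = 1
  hEidem : ∀ i j : ℕ, i ≤ D → j ≤ D → E i * E j = if i = j then E i else 0
  hEsymm : ∀ i : ℕ, (E i)ᵀ = E i
  hEreal : ∀ i : ℕ, (E i).map (starRingEnd ℂ) = E i
  hE0 : E 0 = (Fintype.card X : ℂ)⁻¹ • Matrix.of (fun _ _ => (1 : ℂ))
  θ : ℕ → ℝ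
  hθinj : ∀ i j : ℕ, i ≤ D → j ≤ D → θ i = θ j → i = j
  hAspec : A = ∑ i ∈ Finset.range (D + 1), (θ i : ℂ) • E i
  q : ℕ → ℕ → ℕ → ℝ
  hKrein : ∀ i j : ℕ, i ≤ D → j ≤ D →
    Matrix.hadamard (E i) (E j) =
      (Fintype.card X : ℂ)⁻¹ • ∑ h ∈ Finset.range (D + 1), (q h i j : ℂ) • E h
  hQpoly0 : ∀ h i j : ℕ, h ≤ D → i ≤ D → j ≤ D →
    (i + j < h ∨ h + j < i ∨ h + i < j) → q h i j = 0
  hQpoly1 : ∀ h i j : ℕ, h ≤ D → i ≤ D → j ≤ D →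
    (h = i + j ∨ i = h + j ∨ j = h + i) → q h i j ≠ 0
  x : X
  Estar : ℕ → Matrix X X ℂ
  hEstarzero : ∀ i : ℕ, D < i → Estar i = 0
  hEstar : ∀ i : ℕ, i ≤ D → ∀ y z : X,
    Estar i y z = if y = z ∧ G.dist x y = i then 1 else 0
  Astar : Matrix X X ℂ
  hAstar : ∀ y z : X, Astar y z = if y = z then (Fintype.card X : ℂ) * E 1 x y else 0
  θstar : ℕ → ℝ
  hθstarinj : ∀ i j : ℕ, i ≤ D → j ≤ D → θstar i = θstar j → i = j
  hAstarspec : Astar = ∑ i ∈ Finset.range (D + 1), (θstar i : ℂ) • Estar i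

variable {X : Type*} [Fintype X] [DecidableEq X]

/-- The Terwilliger algebra `T = T(x)`, generated by `A` and `A*`. -/
def TSetup.T (S : TSetup X) : Subalgebra ℂ (Matrix X X ℂ) :=
  Algebra.adjoin ℂ {S.A, S.Astar}

/-- A thin irreducible `T`-module `W` with endpoint `r`, dual endpoint `t` and diameter `d`,
where `E*_i W ≠ 0` iff `r ≤ i ≤ r + d` and `E_i W ≠ 0` iff `t ≤ i ≤ t + d`. -/
structure TMod (S : TSetup X) where
  W : Submodule ℂ (X → ℂ)
  hWinv : ∀ B ∈ S.T, ∀ w ∈ W, B *ᵥ w ∈ W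
  hWne : W ≠ ⊥
  hWirr : ∀ U : Submodule ℂ (X → ℂ), U ≤ W →
    (∀ B ∈ S.T, ∀ w ∈ U, B *ᵥ w ∈ U) → U = ⊥ ∨ U = W
  hthin : ∀ i : ℕ, Module.finrank ℂ (W.map (S.Estar i).mulVecLin) ≤ 1
  r : ℕ
  t : ℕ
  d : ℕ
  hr : ∀ i : ℕ, W.map (S.Estar i).mulVecLin ≠ ⊥ ↔ r ≤ i ∧ i ≤ r + d
  ht : ∀ i : ℕ, W.map (S.E i).mulVecLin ≠ ⊥ ↔ t ≤ i ∧ i ≤ t + d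

open Classical in
/-- The action of a matrix `B` on `W` (the restriction of `B` to `W`; defined to be `0`
if `B` does not leave `W` invariant). -/
def actW (S : TSetup X) (M : TMod S) (B : Matrix X X ℂ) : M.W →ₗ[ℂ] M.W :=
  if h : ∀ w ∈ M.W, B.mulVecLin w ∈ M.W then B.mulVecLin.restrict h else 0

/-- `tr_W(B)`: the trace of the action of `B` on `W`. -/
def trW (S : TSetup X) (M : TMod S) (B : Matrix X X ℂ) : ℂ :=
  LinearMap.trace ℂ M.W (actW S M B)

/-- `a_i(W) = tr_W(E*_{r+i} A)`. -/
def aW (S : TSetup X) (M : TMod S) (i : ℕ) : ℂ :=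
  trW S M (S.Estar (M.r + i) * S.A)

/-- `x_i(W) = tr_W(E*_{r+i} A E*_{r+i-1} A)`, with `x_0(W) = 0`. -/
def xW (S : TSetup X) (M : TMod S) (i : ℕ) : ℂ :=
  if i = 0 then 0 else trW S M (S.Estar (M.r + i) * S.A * S.Estar (M.r + i - 1) * S.A)

/-- `a*_i(W) = tr_W(E_{t+i} A*)`. -/
def astarW (S : TSetup X) (M : TMod S) (i : ℕ) : ℂ :=
  trW S M (S.E (M.t + i) * S.Astar)

/-- `x*_i(W) = tr_W(E_{t+i} A* E_{t+i-1} A*)`, with `x*_0(W) = 0`. -/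
def xstarW (S : TSetup X) (M : TMod S) (i : ℕ) : ℂ :=
  if i = 0 then 0 else trW S M (S.E (M.t + i) * S.Astar * S.E (M.t + i - 1) * S.Astar)

/-- The polynomials `p_i`: `p_0 = 1`, `p_{-1} = 0`,
`λ p_i = p_{i+1} + a_i(W) p_i + x_i(W) p_{i-1}`. -/
def pW (S : TSetup X) (M : TMod S) : ℕ → Polynomial ℂ
  | 0 => 1
  | 1 => Polynomial.X - Polynomial.C (aW S M 0)
  | (n + 2) =>
      (Polynomial.X - Polynomial.C (aW S M (n + 1))) * pW S M (n + 1)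
        - Polynomial.C (xW S M (n + 1)) * pW S M n

/-- The polynomials `p*_i`: `p*_0 = 1`, `p*_{-1} = 0`,
`λ p*_i = p*_{i+1} + a*_i(W) p*_i + x*_i(W) p*_{i-1}`. -/
def pstarW (S : TSetup X) (M : TMod S) : ℕ → Polynomial ℂ
  | 0 => 1
  | 1 => Polynomial.X - Polynomial.C (astarW S M 0)
  | (n + 2) =>
      (Polynomial.X - Polynomial.C (astarW S M (n + 1))) * pstarW S M (n + 1)
        - Polynomial.C (xstarW S M (n + 1)) * pstarW S M n

/-- The Hermitian inner product `⟨u,v⟩ = Σ_y u_y conj(v_y)` on `ℂ^X`. -/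
def herm (u v : X → ℂ) : ℂ := ∑ y, u y * (starRingEnd ℂ) (v y)

/-- `ν(W)`, the multiplicative inverse of `m_0(W) = tr_W(E_t E*_r)`. -/
def nuW (S : TSetup X) (M : TMod S) : ℂ :=
  (trW S M (S.E M.t * S.Estar M.r))⁻¹

/-- `k_i(W) = ν(W) m*_i(W)` where `m*_i(W) = tr_W(E*_{r+i} E_t)`. -/
def kW (S : TSetup X) (M : TMod S) (i : ℕ) : ℂ :=
  nuW S M * trW S M (S.Estar (M.r + i) * S.E M.t)

/-- `k*_i(W) = ν(W) m_i(W)` where `m_i(W) = tr_W(E_{t+i} E*_r)`. -/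
def kstarW (S : TSetup X) (M : TMod S) (i : ℕ) : ℂ :=
  nuW S M * trW S M (S.E (M.t + i) * S.Estar M.r)

/-! ### Determinants of tridiagonal matrices -/

lemma tridiag_det {R : Type*} [CommRing R] (g : ℕ → ℕ → R)
    (hg : ∀ i j, i + 1 < j ∨ j + 1 < i → g i j = 0) (n : ℕ) :
    (Matrix.of (fun i j : Fin (n + 2) => g i j)).det =
      g (n + 1) (n + 1) * (Matrix.of (fun i j : Fin (n + 1) => g i j)).det
        - g (n + 1) n * g n (n + 1) * (Matrix.of (fun i j : Fin n => g i j)).det := by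
  rw [Matrix.det_succ_row _ (Fin.last (n + 1)), Fin.sum_univ_castSucc, Fin.sum_univ_castSucc]
  rw [Finset.sum_eq_zero]
  · have h1 : ((Matrix.of (fun i j : Fin (n + 2) => g i j)).submatrix
        (Fin.last (n + 1)).succAbove (Fin.last (n + 1)).succAbove) =
        Matrix.of (fun i j : Fin (n + 1) => g i j) := by
      ext i j
      simp
    have h2 : ((Matrix.of (fun i j : Fin (n + 2) => g i j)).submatrix
        (Fin.last (n + 1)).succAbove (Fin.last n).castSucc.succAbove).det =
        g n (n + 1) * (Matrix.of (fun i j : Fin n => g i j)).det := by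
      rw [Matrix.det_succ_column _ (Fin.last n), Fin.sum_univ_castSucc, Finset.sum_eq_zero]
      · have h3 : (((Matrix.of (fun i j : Fin (n + 2) => g i j)).submatrix
          (Fin.last (n + 1)).succAbove (Fin.last n).castSucc.succAbove).submatrix
          (Fin.last n).succAbove (Fin.last n).succAbove) =
          Matrix.of (fun i j : Fin n => g i j) := by
          ext i j
          have : (Fin.last n).castSucc.succAbove j.castSucc = j.castSucc.castSucc :=
            Fin.succAbove_of_castSucc_lt _ _ (by
              simp only [Fin.castSucc_lt_castSucc_iff]; exact Fin.castSucc_lt_last j)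
          simp [this]
        rw [h3]
        have : (Fin.last n).castSucc.succAbove (Fin.last n) = Fin.last (n + 1) := by
          rw [Fin.succAbove_of_le_castSucc _ _ le_rfl]; simp
        simp [this, ← two_mul]
      · intro i _
        have : (Fin.last n).castSucc.succAbove (Fin.last n) = Fin.last (n + 1) := by
          rw [Fin.succAbove_of_le_castSucc _ _ le_rfl]; simp
        have h0 : g i (n + 1) = 0 := hg _ _ (Or.inl (by omega))
        simp [this, h0]
    rw [h1, h2]
    have e1 : (-1 : R) ^ (n + 1 + n) = -1 := by
      rw [show n + 1 + n = 2 * n + 1 by ring, pow_succ, pow_mul]; simp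
    have e2 : (-1 : R) ^ (n + 1 + (n + 1)) = 1 := by
      rw [← two_mul, pow_mul]; simp
    simp only [Fin.val_last, Fin.val_castSucc, Matrix.of_apply, e1, e2]
    ring
  · intro i _
    have h0 : g (n + 1) i = 0 := hg _ _ (Or.inr (by omega))
    simp [h0]

/-- The three-term recursion. -/
def recPoly (a x : ℕ → ℂ) : ℕ → Polynomial ℂ
  | 0 => 1
  | 1 => Polynomial.X - Polynomial.C (a 0)
  | (n + 2) =>
      (Polynomial.X - Polynomial.C (a (n + 1))) * recPoly a x (n + 1)
        - Polynomial.C (x (n + 1)) * recPoly a x n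

lemma tridiag_charpoly (m : ℕ → ℕ → ℂ) (hm : ∀ i j, i + 1 < j ∨ j + 1 < i → m i j = 0)
    (a x : ℕ → ℂ) (N : ℕ) (ha : ∀ i, i < N → a i = m i i)
    (hx : ∀ i, i + 1 < N → x (i + 1) = m (i + 1) i * m i (i + 1)) :
    ∀ n, n ≤ N → (Matrix.of (fun i j : Fin n => m i j)).charpoly = recPoly a x n := by
  have key : ∀ n, (Matrix.of (fun i j : Fin n => m i j)).charpoly =
      (Matrix.of (fun i j : Fin n => (fun i j : ℕ =>
        (if i = j then Polynomial.X else 0) - Polynomial.C (m i j)) i j)).det := by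
    intro n
    rw [Matrix.charpoly]
    congr 1
    ext1 i j
    simp [Matrix.charmatrix_apply, Matrix.diagonal_apply, Fin.ext_iff]
  intro n
  induction n using Nat.strong_induction_on with
  | _ n ih =>
    intro hn
    match n, ih, hn with
    | 0, _, _ => simp [recPoly, Matrix.charpoly]
    | 1, _, hn => rw [key]; simp [recPoly, ha 0 hn]
    | n + 2, ih, hn =>
      rw [key, tridiag_det (fun i j : ℕ =>
        (if i = j then Polynomial.X else 0) - Polynomial.C (m i j)), ← key, ← key, ih (n + 1) (by omega) (by omega),
        ih n (by omega) (by omega), recPoly, ha (n + 1) (by omega), hx n (by omega)]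
      · simp
      · intro i j h
        have : i ≠ j := by omega
        simp [this, hm i j h]

/-! ### Linear algebra with a family of orthogonal idempotents -/

section LA
variable {V : Type*} [AddCommGroup V] [Module ℂ V] [FiniteDimensional ℂ V]

lemma exists_idem_basis (n : ℕ) (F : Fin n → Module.End ℂ V)
    (hF : ∀ i j, F i * F j = if i = j then F i else 0) (hne : ∀ i, F i ≠ 0)
    (hn : Module.finrank ℂ V = n) :
    ∃ b : Module.Basis (Fin n) ℂ V, ∀ i j, F i (b j) = if i = j then b j else 0 := by
  have h : ∀ i, ∃ v, F i v ≠ 0 := by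
    intro i
    by_contra! h
    exact hne i (LinearMap.ext h)
  choose u hu using h
  have hv : ∀ i j, F i (F j (u j)) = if i = j then F j (u j) else 0 := by
    intro i j
    have := congrArg (fun f => f (u j)) (hF i j)
    simp only [Module.End.mul_apply] at this
    rw [this]
    split_ifs with h
    · rw [h]
    · rfl
  have hli : LinearIndependent ℂ (fun j => F j (u j)) := by
    rw [Fintype.linearIndependent_iff]
    intro g hg i
    have := congrArg (F i) hg
    simp only [map_sum, map_smul, hv, map_zero] at this
    simp at this
    exact this.resolve_right (hu i)
  have hc : Fintype.card (Fin n) = Module.finrank ℂ V := by simp [hn]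
  rcases Nat.eq_zero_or_pos n with h0 | h0
  · subst h0
    refine ⟨Module.finBasisOfFinrankEq ℂ V hn, fun i => i.elim0⟩
  · have : Nonempty (Fin n) := ⟨⟨0, h0⟩⟩
    refine ⟨basisOfLinearIndependentOfCardEqFinrank hli hc, ?_⟩
    intro i j
    simp only [coe_basisOfLinearIndependentOfCardEqFinrank]
    exact hv i j

lemma trace_idem (f : Module.End ℂ V) (hI : IsIdempotentElem f) :
    LinearMap.trace ℂ V f = (Module.finrank ℂ (LinearMap.range f) : ℂ) :=
  (LinearMap.IsIdempotentElem.isProj_range _ hI).trace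

lemma spectral_la (n : ℕ) (F : Fin n → Module.End ℂ V)
    (hF : ∀ i j, F i * F j = if i = j then F i else 0) (hne : ∀ i, F i ≠ 0)
    (hn : Module.finrank ℂ V = n) (B : Module.End ℂ V) (c : Fin n → ℂ)
    (hc : Function.Injective c) (hB : ∀ i, B * F i = c i • F i) :
    minpoly ℂ B = ∏ i, (Polynomial.X - Polynomial.C (c i)) ∧
    LinearMap.charpoly B = ∏ i, (Polynomial.X - Polynomial.C (c i)) := by
  obtain ⟨b, hb⟩ := exists_idem_basis n F hF hne hn
  have hBb : ∀ i, B (b i) = c i • b i := by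
    intro i
    have := congrArg (fun f => f (b i)) (hB i)
    simpa [Module.End.mul_apply, hb] using this
  have hch : LinearMap.charpoly B = ∏ i, (Polynomial.X - Polynomial.C (c i)) := by
    have hM : LinearMap.toMatrix b b B = Matrix.diagonal c := by
      ext i j
      rw [LinearMap.toMatrix_apply, hBb]
      simp [Matrix.diagonal_apply, Finsupp.single_apply, eq_comm]
      by_cases h : i = j
      · simp [h]
      · simp [h]
    rw [← LinearMap.charpoly_toMatrix B b, hM, Matrix.charpoly_diagonal]
  refine ⟨?_, hch⟩
  apply Polynomial.eq_of_monic_of_associated (minpoly.monic (Algebra.IsIntegral.isIntegral B))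
    (Polynomial.monic_prod_of_monic _ _ fun i _ => Polynomial.monic_X_sub_C _)
  apply associated_of_dvd_dvd
  · rw [← hch]
    exact LinearMap.minpoly_dvd_charpoly B
  · apply Finset.prod_dvd_of_coprime
    · exact (Polynomial.pairwise_coprime_X_sub_C hc).set_pairwise _
    · intro i _
      rw [Polynomial.dvd_iff_isRoot]
      apply Module.End.isRoot_of_hasEigenvalue
      exact Module.End.hasEigenvalue_of_hasEigenvector (x := b i)
        ⟨Module.End.mem_eigenspace_iff.2 (hBb i), b.ne_zero i⟩

lemma tridiag_la (n : ℕ) (F : ℕ → Module.End ℂ V)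
    (hF : ∀ i j, i < n → j < n → F i * F j = if i = j then F i else 0)
    (hne : ∀ i, i < n → F i ≠ 0)
    (hn : Module.finrank ℂ V = n) (B : Module.End ℂ V)
    (hB : ∀ i j, i < n → j < n → i + 1 < j ∨ j + 1 < i → F i * B * F j = 0)
    (a x : ℕ → ℂ) (ha : ∀ i, i < n → a i = LinearMap.trace ℂ V (F i * B))
    (hx : ∀ i, i + 1 < n → x (i + 1) = LinearMap.trace ℂ V (F (i + 1) * B * F i * B)) :
    LinearMap.charpoly B = recPoly a x n := by
  obtain ⟨b, hb⟩ := exists_idem_basis n (fun i : Fin n => F i)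
    (fun i j => by rw [hF i j i.2 j.2]; simp [Fin.ext_iff]) (fun i => hne i i.2) hn
  set M := LinearMap.toMatrix b b B with hM
  have hFM : ∀ i : Fin n, LinearMap.toMatrix b b (F i) = Matrix.single i i 1 := by
    intro i
    ext k l
    rw [LinearMap.toMatrix_apply, hb]
    by_cases h : i = l
    · subst h
      simp [Matrix.single_apply, Finsupp.single_apply]
    · simp [h]
  have hmul : ∀ f g : Module.End ℂ V, LinearMap.toMatrix b b (f * g) =
      LinearMap.toMatrix b b f * LinearMap.toMatrix b b g := fun f g => LinearMap.toMatrix_mul b f g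
  let m : ℕ → ℕ → ℂ := fun i j => if h : i < n ∧ j < n then M ⟨i, h.1⟩ ⟨j, h.2⟩ else 0
  have hmM : Matrix.of (fun i j : Fin n => m i j) = M := by
    ext i j
    simp [m]
  rw [← LinearMap.charpoly_toMatrix B b, ← hM, ← hmM]
  refine tridiag_charpoly m ?_ a x n ?_ ?_ n le_rfl
  · intro i j h
    by_cases h' : i < n ∧ j < n
    · have := congrArg (LinearMap.toMatrix b b) (hB i j h'.1 h'.2 h)
      rw [hmul, hmul, hFM ⟨i, h'.1⟩, hFM ⟨j, h'.2⟩, ← hM] at this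
      have := congrFun (congrFun this ⟨i, h'.1⟩) ⟨j, h'.2⟩
      simpa [m, h'] using this
    · simp [m, h']
  · intro i hi
    rw [ha i hi, LinearMap.trace_eq_matrix_trace ℂ b, hmul, hFM ⟨i, hi⟩, ← hM]
    simp [m, hi, Matrix.trace_single_mul]
  · intro i hi
    have hi' : i < n := by omega
    rw [hx i hi, LinearMap.trace_eq_matrix_trace ℂ b, hmul, hmul, hmul, hFM ⟨i, hi'⟩,
      hFM ⟨i + 1, hi⟩, ← hM]
    rw [Matrix.mul_assoc, Matrix.mul_assoc, Matrix.trace_single_mul]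
    simp [m, hi, hi', Matrix.mul_apply, Matrix.single_apply, ite_and]
end LA

lemma spectral_mem {R : Type*} [Ring R] [Algebra ℂ R] (D : ℕ) (E : ℕ → R) (c : ℕ → ℂ)
    (hsum : ∑ i ∈ Finset.range (D + 1), E i = 1)
    (hid : ∀ i j : ℕ, i ≤ D → j ≤ D → E i * E j = if i = j then E i else 0)
    (hinj : ∀ i j : ℕ, i ≤ D → j ≤ D → c i = c j → i = j) (A : R)
    (hA : A = ∑ i ∈ Finset.range (D + 1), c i • E i) :
    (∀ i, i ≤ D → A * E i = c i • E i) ∧ ∀ i, i ≤ D → E i ∈ Algebra.adjoin ℂ {A} := by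
  have h1 : ∀ i, i ≤ D → A * E i = c i • E i := by
    intro i hi
    rw [hA, Finset.sum_mul, Finset.sum_eq_single i]
    · simp [hid i i hi hi]
    · intro j hj hji
      rw [smul_mul_assoc, hid j i (by simp at hj; omega) hi, if_neg hji, smul_zero]
    · intro h; simp at h; omega
  refine ⟨h1, fun k hk => ?_⟩
  have h2 : ∀ (p : Polynomial ℂ) i, i ≤ D → Polynomial.aeval A p * E i = p.eval (c i) • E i := by
    intro p i hi
    induction p using Polynomial.induction_on' with
    | add p q hp hq => simp [add_mul, hp, hq, add_smul]
    | monomial n a =>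
      have : A ^ n * E i = c i ^ n • E i := by
        induction n with
        | zero => simp
        | succ n ih => rw [pow_succ, mul_assoc, h1 i hi, mul_smul_comm, ih, smul_smul, pow_succ,
            mul_comm]
      rw [Polynomial.aeval_monomial, mul_assoc, this, Polynomial.eval_monomial, mul_smul,
        Algebra.smul_def a]
  have h3 : E k = Polynomial.aeval A (Lagrange.basis (Finset.range (D + 1)) c k) := by
    rw [← mul_one (Polynomial.aeval A _), ← hsum, Finset.mul_sum, Finset.sum_eq_single k]
    · rw [h2 _ k hk, Lagrange.eval_basis_self, one_smul]
      · intro i hi j hj h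
        simp at hi hj
        exact hinj i j (by omega) (by omega) h
      · simp; omega
    · intro j hj hjk
      rw [h2 _ j (by simp at hj; omega), Lagrange.eval_basis_of_ne (Ne.symm hjk) hj, zero_smul]
    · intro h; simp at h; omega
  rw [h3]
  exact Polynomial.aeval_mem_adjoin_singleton ℂ A

/-! ### The action on `W` -/

lemma actW_apply (S : TSetup X) (M : TMod S) {B : Matrix X X ℂ} (hB : B ∈ S.T) (w : M.W) :
    (actW S M B w : X → ℂ) = B *ᵥ (w : X → ℂ) := by
  have h : ∀ w ∈ M.W, B.mulVecLin w ∈ M.W := fun w hw => M.hWinv B hB w hw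
  rw [actW, dif_pos h]
  rfl

lemma actW_mul (S : TSetup X) (M : TMod S) {B C : Matrix X X ℂ} (hB : B ∈ S.T) (hC : C ∈ S.T) :
    actW S M (B * C) = (actW S M B * actW S M C : Module.End ℂ M.W) := by
  ext1 w
  apply Subtype.ext
  rw [actW_apply S M (mul_mem hB hC), Module.End.mul_apply, actW_apply S M hB, actW_apply S M hC,
    Matrix.mulVec_mulVec]

lemma actW_zero (S : TSetup X) (M : TMod S) : actW S M 0 = 0 := by
  ext1 w
  apply Subtype.ext
  rw [actW_apply S M (zero_mem _)]
  simp

lemma actW_smul (S : TSetup X) (M : TMod S) (c : ℂ) {B : Matrix X X ℂ} (hB : B ∈ S.T) :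
    actW S M (c • B) = c • actW S M B := by
  ext1 w
  apply Subtype.ext
  rw [actW_apply S M (Subalgebra.smul_mem _ hB c), LinearMap.smul_apply, Submodule.coe_smul,
    actW_apply S M hB, Matrix.smul_mulVec]

lemma actW_one (S : TSetup X) (M : TMod S) : actW S M 1 = (1 : Module.End ℂ M.W) := by
  ext1 w
  apply Subtype.ext
  rw [actW_apply S M (one_mem _)]
  simp

lemma actW_sum (S : TSetup X) (M : TMod S) (F : ℕ → Matrix X X ℂ) (hF : ∀ i, F i ∈ S.T)
    (s : Finset ℕ) : actW S M (∑ i ∈ s, F i) = ∑ i ∈ s, actW S M (F i) := by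
  ext1 w
  apply Subtype.ext
  rw [actW_apply S M (sum_mem fun i _ => hF i), LinearMap.sum_apply, Matrix.sum_mulVec,
    AddSubmonoidClass.coe_finsetSum]
  exact Finset.sum_congr rfl fun i _ => (actW_apply S M (hF i) w).symm

lemma actW_map_eq (S : TSetup X) (M : TMod S) {B : Matrix X X ℂ} (hB : B ∈ S.T) :
    M.W.map B.mulVecLin = (LinearMap.range (actW S M B)).map M.W.subtype := by
  ext v
  simp only [Submodule.mem_map, LinearMap.mem_range, Matrix.mulVecLin_apply]
  constructor
  · rintro ⟨w, hw, rfl⟩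
    exact ⟨_, ⟨⟨w, hw⟩, rfl⟩, actW_apply S M hB ⟨w, hw⟩⟩
  · rintro ⟨_, ⟨w, rfl⟩, rfl⟩
    exact ⟨w, w.2, (actW_apply S M hB w).symm⟩

lemma actW_map_bot (S : TSetup X) (M : TMod S) {B : Matrix X X ℂ} (hB : B ∈ S.T) :
    M.W.map B.mulVecLin = ⊥ ↔ actW S M B = 0 := by
  rw [actW_map_eq S M hB, ← LinearMap.range_eq_bot (f := actW S M B)]
  constructor
  · intro h
    exact Submodule.map_injective_of_injective M.W.injective_subtype (by rw [h, Submodule.map_bot])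
  · intro h
    rw [h, Submodule.map_bot]

section Family
variable (S : TSetup X) (M : TMod S) (F : ℕ → Matrix X X ℂ) (hT : ∀ i, F i ∈ S.T)
  (hz : ∀ i, S.D < i → F i = 0)
  (hid : ∀ i j : ℕ, i ≤ S.D → j ≤ S.D → F i * F j = if i = j then F i else 0)
  (s : ℕ) (hs : ∀ i : ℕ, M.W.map (F i).mulVecLin ≠ ⊥ ↔ s ≤ i ∧ i ≤ s + M.d)

lemma fam_ne (hT : ∀ i, F i ∈ S.T)
    (hs : ∀ i : ℕ, M.W.map (F i).mulVecLin ≠ ⊥ ↔ s ≤ i ∧ i ≤ s + M.d) (i : ℕ) :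
    actW S M (F i) ≠ 0 ↔ s ≤ i ∧ i ≤ s + M.d := by
  rw [← hs i, Ne, Ne, actW_map_bot S M (hT i)]

lemma fam_le (hT : ∀ i, F i ∈ S.T) (hz : ∀ i, S.D < i → F i = 0)
    (hs : ∀ i : ℕ, M.W.map (F i).mulVecLin ≠ ⊥ ↔ s ≤ i ∧ i ≤ s + M.d) :
    s + M.d ≤ S.D := by
  by_contra! h
  refine (fam_ne S M F s hT hs (s + M.d)).2 ⟨by omega, le_rfl⟩ ?_
  rw [hz _ h, actW_zero]

lemma fam_orth (hT : ∀ i, F i ∈ S.T) (hz : ∀ i, S.D < i → F i = 0)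
    (hid : ∀ i j : ℕ, i ≤ S.D → j ≤ S.D → F i * F j = if i = j then F i else 0)
    (hs : ∀ i : ℕ, M.W.map (F i).mulVecLin ≠ ⊥ ↔ s ≤ i ∧ i ≤ s + M.d) (i j : ℕ)
    (hi : i < M.d + 1) (hj : j < M.d + 1) :
    (actW S M (F (s + i)) * actW S M (F (s + j)) : Module.End ℂ M.W) =
      if i = j then actW S M (F (s + i)) else 0 := by
  have := fam_le S M F s hT hz hs
  rw [← actW_mul S M (hT _) (hT _), hid _ _ (by omega) (by omega)]
  by_cases h : i = j
  · simp [h]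
  · simp [h, actW_zero]

lemma fam_sum (hT : ∀ i, F i ∈ S.T) (hz : ∀ i, S.D < i → F i = 0)
    (hsum : ∑ i ∈ Finset.range (S.D + 1), F i = 1)
    (hs : ∀ i : ℕ, M.W.map (F i).mulVecLin ≠ ⊥ ↔ s ≤ i ∧ i ≤ s + M.d) :
    ∑ i ∈ Finset.range (M.d + 1), actW S M (F (s + i)) = (1 : Module.End ℂ M.W) := by
  have := fam_le S M F s hT hz hs
  rw [← actW_one, ← hsum, actW_sum S M F hT,
    ← Finset.sum_image (f := fun i => actW S M (F i)) (g := fun i => s + i)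
      (fun a _ b _ h => by simpa using h)]
  apply Finset.sum_subset
  · intro k hk
    simp only [Finset.mem_image, Finset.mem_range] at hk ⊢
    omega
  · intro k _ hk
    by_contra h
    have := (fam_ne S M F s hT hs k).1 h
    apply hk
    simp only [Finset.mem_image, Finset.mem_range]
    exact ⟨k - s, by omega, by omega⟩

lemma fam_finrank (hT : ∀ i, F i ∈ S.T) (hz : ∀ i, S.D < i → F i = 0)
    (hid : ∀ i j : ℕ, i ≤ S.D → j ≤ S.D → F i * F j = if i = j then F i else 0)
    (hsum : ∑ i ∈ Finset.range (S.D + 1), F i = 1)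
    (hs : ∀ i : ℕ, M.W.map (F i).mulVecLin ≠ ⊥ ↔ s ≤ i ∧ i ≤ s + M.d)
    (hthin : ∀ i, Module.finrank ℂ (M.W.map (F i).mulVecLin) ≤ 1) :
    Module.finrank ℂ M.W = M.d + 1 := by
  have h1 : (Module.finrank ℂ M.W : ℂ) = ((M.d + 1 : ℕ) : ℂ) := by
    rw [← LinearMap.trace_one ℂ M.W, ← fam_sum S M F s hT hz hsum hs, map_sum]
    rw [Finset.sum_congr rfl (g := fun _ => (1 : ℂ))]
    · simp
    · intro i hi
      rw [Finset.mem_range] at hi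
      have hI : IsIdempotentElem (actW S M (F (s + i)) : Module.End ℂ M.W) := by
        have := fam_orth S M F s hT hz hid hs i i hi hi
        rwa [if_pos rfl] at this
      rw [trace_idem _ hI]
      have h2 : Module.finrank ℂ (LinearMap.range (actW S M (F (s + i)))) =
          Module.finrank ℂ (M.W.map (F (s + i)).mulVecLin) := by
        rw [actW_map_eq S M (hT _), Submodule.finrank_map_subtype_eq]
      have h3 := hthin (s + i)
      have h4 : Module.finrank ℂ (M.W.map (F (s + i)).mulVecLin) ≠ 0 := by
        rw [Ne, Submodule.finrank_eq_zero]
        exact (hs _).2 ⟨by omega, by omega⟩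
      rw [h2, show Module.finrank ℂ (M.W.map (F (s + i)).mulVecLin) = 1 by omega]
      simp
  exact_mod_cast h1

lemma fam_spectral (hT : ∀ i, F i ∈ S.T) (hz : ∀ i, S.D < i → F i = 0)
    (hid : ∀ i j : ℕ, i ≤ S.D → j ≤ S.D → F i * F j = if i = j then F i else 0)
    (hs : ∀ i : ℕ, M.W.map (F i).mulVecLin ≠ ⊥ ↔ s ≤ i ∧ i ≤ s + M.d)
    (hn : Module.finrank ℂ M.W = M.d + 1) (B : Matrix X X ℂ) (hB : B ∈ S.T) (c : ℕ → ℝ)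
    (hc : ∀ i j : ℕ, i ≤ S.D → j ≤ S.D → c i = c j → i = j)
    (hBF : ∀ i, i ≤ S.D → B * F i = (c i : ℂ) • F i) :
    minpoly ℂ (actW S M B : Module.End ℂ M.W) =
      ∏ i ∈ Finset.range (M.d + 1), (Polynomial.X - Polynomial.C ((c (s + i) : ℂ))) ∧
    LinearMap.charpoly (actW S M B) =
      ∏ i ∈ Finset.range (M.d + 1), (Polynomial.X - Polynomial.C ((c (s + i) : ℂ))) := by
  have := fam_le S M F s hT hz hs
  rw [Finset.prod_range]
  refine spectral_la (M.d + 1) (fun i : Fin (M.d + 1) => actW S M (F (s + i))) ?_ ?_ hn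
    (actW S M B) (fun i => (c (s + i) : ℂ)) ?_ ?_
  · intro i j
    rw [fam_orth S M F s hT hz hid hs i j i.2 j.2]
    simp [Fin.ext_iff]
  · intro i
    exact (fam_ne S M F s hT hs _).2 ⟨by omega, by omega⟩
  · intro i j h
    have h' := hc _ _ (by omega) (by omega) (Complex.ofReal_injective h)
    ext; omega
  · intro i
    rw [← actW_mul S M hB (hT _), hBF _ (by omega), actW_smul S M _ (hT _)]

lemma fam_tridiag (hT : ∀ i, F i ∈ S.T) (hz : ∀ i, S.D < i → F i = 0)
    (hid : ∀ i j : ℕ, i ≤ S.D → j ≤ S.D → F i * F j = if i = j then F i else 0)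
    (hs : ∀ i : ℕ, M.W.map (F i).mulVecLin ≠ ⊥ ↔ s ≤ i ∧ i ≤ s + M.d)
    (hn : Module.finrank ℂ M.W = M.d + 1) (B : Matrix X X ℂ) (hB : B ∈ S.T)
    (hBF : ∀ i j, i ≤ S.D → j ≤ S.D → i + 1 < j ∨ j + 1 < i → F i * B * F j = 0)
    (a x : ℕ → ℂ) (ha : ∀ i, a i = trW S M (F (s + i) * B))
    (hx : ∀ i, x (i + 1) = trW S M (F (s + (i + 1)) * B * F (s + (i + 1) - 1) * B)) :
    LinearMap.charpoly (actW S M B) = recPoly a x (M.d + 1) := by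
  have := fam_le S M F s hT hz hs
  refine tridiag_la (M.d + 1) (fun i => actW S M (F (s + i))) ?_ ?_ hn (actW S M B) ?_ a x ?_ ?_
  · exact fam_orth S M F s hT hz hid hs
  · intro i hi
    exact (fam_ne S M F s hT hs _).2 ⟨by omega, by omega⟩
  · intro i j hi hj h
    rw [← actW_mul S M (hT _) hB, ← actW_mul S M (mul_mem (hT _) hB) (hT _),
      hBF _ _ (by omega) (by omega) (by omega), actW_zero]
  · intro i _
    rw [ha, trW, actW_mul S M (hT _) hB]
  · intro i _
    rw [hx, trW, show s + (i + 1) - 1 = s + i by omega,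
      actW_mul S M (mul_mem (mul_mem (hT _) hB) (hT _)) hB,
      actW_mul S M (mul_mem (hT _) hB) (hT _), actW_mul S M (hT _) hB]
end Family

/-! ### Facts about the graph -/

lemma Estar_orth (S : TSetup X) (i j : ℕ) (hi : i ≤ S.D) (hj : j ≤ S.D) :
    S.Estar i * S.Estar j = if i = j then S.Estar i else 0 := by
  ext y z
  rw [Matrix.mul_apply, Finset.sum_eq_single y]
  · rw [S.hEstar i hi, S.hEstar j hj]
    by_cases h : i = j
    · subst h
      rw [if_pos rfl, S.hEstar i hi]
      by_cases h1 : S.G.dist S.x y = i <;> simp [h1]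
    · rw [if_neg h]
      by_cases h1 : S.G.dist S.x y = i
      · have : S.G.dist S.x y ≠ j := by omega
        simp [this]
      · simp [h1]
  · intro w _ hw
    rw [S.hEstar i hi]
    simp [Ne.symm hw]
  · simp

lemma Estar_sum (S : TSetup X) : ∑ i ∈ Finset.range (S.D + 1), S.Estar i = 1 := by
  ext y z
  rw [Matrix.sum_apply, Finset.sum_eq_single (S.G.dist S.x y)]
  · rw [S.hEstar _ (S.hDiamLe _ _)]
    simp [Matrix.one_apply]
  · intro i hi hne
    rw [S.hEstar i (by simp at hi; omega)]
    simp [Ne.symm hne]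
  · intro h
    have := S.hDiamLe S.x y
    simp at h
    omega

lemma Estar_tridiag (S : TSetup X) (i j : ℕ) (hi : i ≤ S.D) (hj : j ≤ S.D)
    (h : i + 1 < j ∨ j + 1 < i) : S.Estar i * S.A * S.Estar j = 0 := by
  ext y z
  rw [Matrix.mul_assoc, Matrix.mul_apply, Finset.sum_eq_single y, Matrix.mul_apply,
    Finset.sum_eq_single z, S.hEstar i hi, S.hEstar j hj, S.hA]
  · by_cases h1 : S.G.dist S.x y = i
    · by_cases h2 : S.G.dist S.x z = j
      · have : ¬ S.G.Adj y z := by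
          intro hadj
          have hd := SimpleGraph.dist_eq_one_iff_adj.2 hadj
          have t1 := S.hGconn.dist_triangle (u := S.x) (v := y) (w := z)
          have t2 := S.hGconn.dist_triangle (u := S.x) (v := z) (w := y)
          rw [SimpleGraph.dist_comm (u := z)] at t2
          omega
        simp [this]
      · simp [h2]
    · simp [h1]
  · intro w _ hw
    rw [S.hEstar j hj]
    simp [hw]
  · simp
  · intro w _ hw
    rw [S.hEstar i hi]
    simp [Ne.symm hw]
  · simp

open scoped ComplexOrder in
lemma E_tridiag (S : TSetup X) (i j : ℕ) (hi : i ≤ S.D) (hj : j ≤ S.D)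
    (h : i + 1 < j ∨ j + 1 < i) : S.E i * S.Astar * S.E j = 0 := by
  have hD := S.hD3
  have hq : S.q 1 i j = 0 := S.hQpoly0 1 i j (by omega) hi hj (by omega)
  have hEH : ∀ k, (S.E k)ᴴ = S.E k := by
    intro k
    ext a b
    have h1 := congrFun (congrFun (S.hEreal k) b) a
    have h2 := congrFun (congrFun (S.hEsymm k) a) b
    rw [Matrix.conjTranspose_apply, ← h2]
    exact h1
  have hEst : ∀ k a b, star (S.E k a b) = S.E k a b := by
    intro k a b
    exact congrFun (congrFun (S.hEreal k) a) b
  have hEs : ∀ k a b, S.E k a b = S.E k b a := by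
    intro k a b
    exact congrFun (congrFun (S.hEsymm k) b) a
  have hAd : S.Astar = Matrix.diagonal (fun y => (Fintype.card X : ℂ) * S.E 1 S.x y) := by
    ext a b
    rw [S.hAstar, Matrix.diagonal_apply]
  have hAH : (S.Astar)ᴴ = S.Astar := by
    rw [hAd, Matrix.diagonal_conjTranspose]
    congr 1
    ext a
    simp only [Pi.star_apply, star_mul', hEst]
    simp
  rw [← Matrix.trace_mul_conjTranspose_self_eq_zero_iff]
  rw [Matrix.conjTranspose_mul, Matrix.conjTranspose_mul, hEH, hEH, hAH]
  have e1 : S.E i * S.Astar * S.E j * (S.E j * (S.Astar * S.E i)) =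
      (S.E i * S.Astar * S.E j * S.Astar) * S.E i := by
    have : S.E j * S.E j = S.E j := by rw [S.hEidem j j hj hj, if_pos rfl]
    calc _ = S.E i * S.Astar * (S.E j * S.E j) * S.Astar * S.E i := by
          simp only [Matrix.mul_assoc]
      _ = _ := by rw [this]
  rw [e1, Matrix.trace_mul_comm]
  have e2 : S.E i * (S.E i * S.Astar * S.E j * S.Astar) = S.E i * S.Astar * (S.E j * S.Astar) := by
    have : S.E i * S.E i = S.E i := by rw [S.hEidem i i hi hi, if_pos rfl]
    calc _ = (S.E i * S.E i) * S.Astar * (S.E j * S.Astar) := by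
          simp only [Matrix.mul_assoc]
      _ = _ := by rw [this]
  rw [e2]
  have hmid : S.E 1 * (Matrix.hadamard (S.E i) (S.E j)) * S.E 1 = 0 := by
    rw [S.hKrein i j hi hj, Matrix.mul_smul, Matrix.smul_mul, Finset.mul_sum, Finset.sum_mul,
      Finset.sum_eq_zero, smul_zero]
    intro k hk
    rw [Matrix.mul_smul, Matrix.smul_mul, S.hEidem 1 k (by omega) (by simp at hk; omega)]
    by_cases h1 : 1 = k
    · subst h1
      simp [hq]
    · simp [h1]
  have hxx := congrFun (congrFun hmid S.x) S.x
  have e3 : (S.E i * S.Astar * (S.E j * S.Astar)).trace =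
      (Fintype.card X : ℂ) ^ 2 *
        (S.E 1 * (Matrix.hadamard (S.E i) (S.E j)) * S.E 1) S.x S.x := by
    rw [hAd]
    simp only [Matrix.trace, Matrix.diag_apply, Matrix.mul_apply (M := S.E i * _),
      Matrix.mul_diagonal, Matrix.mul_apply (M := S.E 1 * _), Matrix.mul_apply (M := S.E 1),
      Matrix.hadamard_apply, Finset.mul_sum, Finset.sum_mul]
    rw [Finset.sum_comm]
    refine Finset.sum_congr rfl fun y _ => Finset.sum_congr rfl fun z _ => ?_
    rw [hEs j y z, hEs 1 y S.x]
    ring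
  rw [e3, hxx]
  simp

/-- `p_{d+1} = ∏_{i=0}^d (λ - θ_{t+i})` is both the minimal and the characteristic
polynomial of the restriction of `A` to `W`; dually for `p*_{d+1}` and `A*`. -/
theorem stmt7 (S : TSetup X) (M : TMod S) (hd : 0 < M.d) :
    (pW S M (M.d + 1) =
      ∏ i ∈ Finset.range (M.d + 1), (Polynomial.X - Polynomial.C ((S.θ (M.t + i) : ℂ)))) ∧
    minpoly ℂ (actW S M S.A : Module.End ℂ M.W) = pW S M (M.d + 1) ∧
    LinearMap.charpoly (actW S M S.A) = pW S M (M.d + 1) ∧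
    (pstarW S M (M.d + 1) =
      ∏ i ∈ Finset.range (M.d + 1), (Polynomial.X - Polynomial.C ((S.θstar (M.r + i) : ℂ)))) ∧
    minpoly ℂ (actW S M S.Astar : Module.End ℂ M.W) = pstarW S M (M.d + 1) ∧
    LinearMap.charpoly (actW S M S.Astar) = pstarW S M (M.d + 1) := by
  have hAT : S.A ∈ S.T := Algebra.subset_adjoin (by simp)
  have hAsT : S.Astar ∈ S.T := Algebra.subset_adjoin (by simp)
  obtain ⟨hAE, hEm⟩ := spectral_mem S.D S.E (fun i => (S.θ i : ℂ)) S.hEsum S.hEidem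
    (fun i j hi hj h => S.hθinj i j hi hj (Complex.ofReal_injective h)) S.A S.hAspec
  obtain ⟨hAsE, hEsm⟩ := spectral_mem S.D S.Estar (fun i => (S.θstar i : ℂ)) (Estar_sum S)
    (Estar_orth S) (fun i j hi hj h => S.hθstarinj i j hi hj (Complex.ofReal_injective h))
    S.Astar S.hAstarspec
  have hET : ∀ i, S.E i ∈ S.T := by
    intro i
    by_cases h : i ≤ S.D
    · exact Algebra.adjoin_mono (by simp) (hEm i h)
    · rw [S.hEzero i (by omega)]
      exact zero_mem _
  have hEsT : ∀ i, S.Estar i ∈ S.T := by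
    intro i
    by_cases h : i ≤ S.D
    · exact Algebra.adjoin_mono (by simp) (hEsm i h)
    · rw [S.hEstarzero i (by omega)]
      exact zero_mem _
  have hn := fam_finrank S M S.Estar M.r hEsT S.hEstarzero (Estar_orth S) (Estar_sum S) M.hr
    M.hthin
  obtain ⟨m1, c1⟩ := fam_spectral S M S.E M.t hET S.hEzero S.hEidem M.ht hn S.A hAT S.θ
    S.hθinj hAE
  obtain ⟨m2, c2⟩ := fam_spectral S M S.Estar M.r hEsT S.hEstarzero (Estar_orth S) M.hr hn
    S.Astar hAsT S.θstar S.hθstarinj hAsE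
  have r1 : ∀ n, recPoly (aW S M) (xW S M) n = pW S M n := by
    intro n
    induction n using Nat.twoStepInduction with
    | zero => rfl
    | one => rfl
    | more n h1 h2 => rw [recPoly, pW, h1, h2]
  have r2 : ∀ n, recPoly (astarW S M) (xstarW S M) n = pstarW S M n := by
    intro n
    induction n using Nat.twoStepInduction with
    | zero => rfl
    | one => rfl
    | more n h1 h2 => rw [recPoly, pstarW, h1, h2]
  have t1 := fam_tridiag S M S.Estar M.r hEsT S.hEstarzero (Estar_orth S) M.hr hn S.A hAT
    (Estar_tridiag S) (aW S M) (xW S M) (fun _ => rfl)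
    (fun i => by rw [xW, if_neg (Nat.succ_ne_zero i)])
  have t2 := fam_tridiag S M S.E M.t hET S.hEzero S.hEidem M.ht hn S.Astar hAsT
    (E_tridiag S) (astarW S M) (xstarW S M) (fun _ => rfl)
    (fun i => by rw [xstarW, if_neg (Nat.succ_ne_zero i)])
  rw [r1] at t1
  rw [r2] at t2
  exact ⟨t1 ▸ c1, by rw [m1, ← c1, t1], t1, t2 ▸ c2, by rw [m2, ← c2, t2], t2⟩
end
end

section
/- For 0 ≤ i ≤ d, b_0(W)b_1(W)···b_{i−1}(W) = p_i(θ_t); consequently b_i(W) = p_{i+1}(θ_t)/p_i(θ_t) for 0 ≤ i ≤ d−1 and c_i(W) = x_i(W)p_{i−1}(θ_t)/p_i(θ_t) for 1 ≤ i ≤ d (in particular p_i(θ_t) ≠ 0 for 0 ≤ i ≤ d). -/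
open Matrix
open scoped Classical

noncomputable section

variable {X : Type*} [Fintype X] [DecidableEq X]

lemma Estar_mulVec (S : TSetup X) (i : ℕ) (u : X → ℂ) (y : X) :
    (S.Estar i *ᵥ u) y = if S.G.dist S.x y = i then u y else 0 := by
  by_cases hi : i ≤ S.D
  · simp only [Matrix.mulVec, dotProduct, S.hEstar i hi]
    rw [Finset.sum_eq_single y]
    · simp
    · intro z _ hz
      simp [hz.symm]
    · simp
  · have h1 : S.G.dist S.x y ≠ i := by
      have := S.hDiamLe S.x y
      omega
    rw [S.hEstarzero i (by omega)]
    simp [h1]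

lemma Estar_Estar (S : TSetup X) (i j : ℕ) (u : X → ℂ) :
    S.Estar i *ᵥ (S.Estar j *ᵥ u) = if j = i then S.Estar j *ᵥ u else 0 := by
  ext y
  rw [Estar_mulVec, Estar_mulVec]
  by_cases h : j = i
  · subst h
    rw [if_pos rfl, Estar_mulVec]
    split_ifs <;> rfl
  · rw [if_neg h]
    by_cases h1 : S.G.dist S.x y = i
    · have : S.G.dist S.x y ≠ j := by omega
      simp [this]
    · simp [h1]

lemma idem_mem_adjoin (D : ℕ) (E : ℕ → Matrix X X ℂ) (θ : ℕ → ℝ) (B : Matrix X X ℂ)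
    (hsum : ∑ i ∈ Finset.range (D + 1), E i = 1)
    (hidem : ∀ i j : ℕ, i ≤ D → j ≤ D → E i * E j = if i = j then E i else 0)
    (hinj : ∀ i j : ℕ, i ≤ D → j ≤ D → θ i = θ j → i = j)
    (hB : B = ∑ i ∈ Finset.range (D + 1), (θ i : ℂ) • E i) (t : ℕ) (ht : t ≤ D) :
    (∃ p : Polynomial ℂ, E t = Polynomial.aeval B p) ∧ B * E t = (θ t : ℂ) • E t := by
  have hBE : ∀ j ≤ D, B * E j = (θ j : ℂ) • E j := by
    intro j hj
    rw [hB, Finset.sum_mul, Finset.sum_eq_single j]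
    · simp [hidem j j hj hj]
    · intro i hi hij
      rw [Finset.mem_range] at hi
      simp [hidem i j (by omega) hj, hij]
    · intro h
      simp at h
      omega
  have hpE : ∀ (p : Polynomial ℂ), ∀ j ≤ D,
      Polynomial.aeval B p * E j = (p.eval (θ j : ℂ)) • E j := by
    intro p j hj
    induction p using Polynomial.induction_on' with
    | add p q hp hq => simp [add_mul, hp, hq, add_smul]
    | monomial n a =>
      have : ∀ n : ℕ, B ^ n * E j = ((θ j : ℂ) ^ n) • E j := by
        intro n
        induction n with
        | zero => simp
        | succ n ih => rw [pow_succ, mul_assoc, hBE j hj, mul_smul_comm, ih, smul_smul, pow_succ, mul_comm]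
      rw [Polynomial.aeval_monomial, mul_assoc, this, Polynomial.eval_monomial,
        ← Algebra.smul_def, smul_smul]
  refine ⟨⟨Lagrange.basis (Finset.range (D + 1)) (fun i => (θ i : ℂ)) t, ?_⟩, hBE t ht⟩
  have hinj' : Set.InjOn (fun i => (θ i : ℂ)) (Finset.range (D + 1) : Finset ℕ) := by
    intro i hi j hj h
    simp at hi hj h
    exact hinj i j (by omega) (by omega) h
  rw [← mul_one (Polynomial.aeval B _), ← hsum, Finset.mul_sum, Finset.sum_eq_single t]
  · rw [hpE _ t ht]
    have := Lagrange.eval_basis_self (v := fun i => (θ i : ℂ)) hinj' (i := t)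
      (by simp; omega)
    rw [this, one_smul]
  · intro j hj hjt
    rw [hpE _ j (by simp at hj; omega)]
    have := Lagrange.eval_basis_of_ne (v := fun i => (θ i : ℂ)) (Ne.symm hjt) hj
    rw [this, zero_smul]
  · intro h
    simp at h
    omega

lemma T_inv (S : TSetup X) (U : Submodule ℂ (X → ℂ)) (hA : ∀ w ∈ U, S.A *ᵥ w ∈ U)
    (hAs : ∀ w ∈ U, S.Astar *ᵥ w ∈ U) : ∀ B ∈ S.T, ∀ w ∈ U, B *ᵥ w ∈ U := by
  intro B hB
  refine Algebra.adjoin_induction (p := fun B _ => ∀ w ∈ U, B *ᵥ w ∈ U) ?_ ?_ ?_ ?_ hB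
  · intro B hB
    simp only [Set.mem_insert_iff, Set.mem_singleton_iff] at hB
    rcases hB with rfl | rfl
    · exact hA
    · exact hAs
  · intro r w hw
    rw [Algebra.algebraMap_eq_smul_one, Matrix.smul_mulVec, Matrix.one_mulVec]
    exact U.smul_mem _ hw
  · intro a b _ _ ha hb w hw
    rw [Matrix.add_mulVec]
    exact U.add_mem (ha w hw) (hb w hw)
  · intro a b _ _ ha hb w hw
    rw [← Matrix.mulVec_mulVec]
    exact ha _ (hb w hw)

lemma Astar_Estar (S : TSetup X) (i : ℕ) (u : X → ℂ) :
    ∃ k : ℂ, S.Astar *ᵥ (S.Estar i *ᵥ u) = k • (S.Estar i *ᵥ u) := by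
  refine ⟨if i ≤ S.D then (S.θstar i : ℂ) else 0, ?_⟩
  rw [S.hAstarspec, Matrix.sum_mulVec]
  simp only [Matrix.smul_mulVec, Estar_Estar]
  by_cases hi : i ≤ S.D
  · rw [Finset.sum_eq_single i]
    · simp [hi]
    · intro j _ hj
      simp [hj.symm]
    · intro h
      simp at h
      omega
  · simp [S.hEstarzero i (by omega)]

/-- Spans of components of `u` closed under `A` are `T`-invariant. -/
lemma span_T_inv (S : TSetup X) (u : X → ℂ) (s : Set ℕ)
    (hA : ∀ i ∈ s, S.A *ᵥ (S.Estar i *ᵥ u) ∈ Submodule.span ℂ (Set.image (fun i => S.Estar i *ᵥ u) s)) :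
    ∀ B ∈ S.T, ∀ w ∈ Submodule.span ℂ (Set.image (fun i => S.Estar i *ᵥ u) s),
      B *ᵥ w ∈ Submodule.span ℂ (Set.image (fun i => S.Estar i *ᵥ u) s) := by
  apply T_inv
  · intro w hw
    have : Submodule.span ℂ (Set.image (fun i => S.Estar i *ᵥ u) s) ≤
        (Submodule.span ℂ (Set.image (fun i => S.Estar i *ᵥ u) s)).comap S.A.mulVecLin := by
      rw [Submodule.span_le]
      rintro _ ⟨i, hi, rfl⟩
      exact hA i hi
    exact this hw
  · intro w hw
    have : Submodule.span ℂ (Set.image (fun i => S.Estar i *ᵥ u) s) ≤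
        (Submodule.span ℂ (Set.image (fun i => S.Estar i *ᵥ u) s)).comap S.Astar.mulVecLin := by
      rw [Submodule.span_le]
      rintro _ ⟨i, hi, rfl⟩
      obtain ⟨k, hk⟩ := Astar_Estar S i u
      change S.Astar *ᵥ (S.Estar i *ᵥ u) ∈
        Submodule.span ℂ (Set.image (fun i => S.Estar i *ᵥ u) s)
      rw [hk]
      exact Submodule.smul_mem _ _ (Submodule.subset_span ⟨i, hi, rfl⟩)
    exact this hw

lemma Estar_mem_T (S : TSetup X) (i : ℕ) : S.Estar i ∈ S.T := by
  by_cases hi : i ≤ S.D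
  · have key := idem_mem_adjoin S.D S.Estar S.θstar S.Astar ?_ ?_ S.hθstarinj S.hAstarspec i hi
    · obtain ⟨⟨p, hp⟩, -⟩ := key
      rw [hp]
      have h := Polynomial.aeval_mem_adjoin_singleton ℂ S.Astar (p := p)
      exact Algebra.adjoin_mono (by simp) h
    · ext1 v
      intro w
      rw [Matrix.sum_apply]
      simp only [Matrix.one_apply]
      rw [Finset.sum_eq_single (S.G.dist S.x v)]
      · rw [S.hEstar _ (S.hDiamLe _ _)]
        simp
      · intro j hj hne
        rw [S.hEstar _ (by simp at hj; omega)]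
        simp [hne.symm]
      · intro h
        have := S.hDiamLe S.x v
        simp at h
        omega
    · intro i j _ _
      apply Matrix.ext_of_mulVec_single
      intro k
      rw [← Matrix.mulVec_mulVec, Estar_Estar]
      by_cases h : i = j
      · simp [h]
      · rw [if_neg h, if_neg (Ne.symm h), Matrix.zero_mulVec]
  · rw [S.hEstarzero i (by omega)]
    exact Subalgebra.zero_mem _

lemma E_mem_T (S : TSetup X) (i : ℕ) : S.E i ∈ S.T := by
  by_cases hi : i ≤ S.D
  · obtain ⟨⟨p, hp⟩, -⟩ := idem_mem_adjoin S.D S.E S.θ S.A S.hEsum S.hEidem S.hθinj S.hAspec i hi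
    rw [hp]
    have h := Polynomial.aeval_mem_adjoin_singleton ℂ S.A (p := p)
    exact Algebra.adjoin_mono (by simp) h
  · rw [S.hEzero i (by omega)]
    exact Subalgebra.zero_mem _

lemma A_mem_T (S : TSetup X) : S.A ∈ S.T := Algebra.subset_adjoin (by simp)

lemma trace_rank_one {W : Type*} [AddCommGroup W] [Module ℂ W] [FiniteDimensional ℂ W]
    (f : W →ₗ[ℂ] W) (v : W) (hv : v ≠ 0) (k : ℂ) (hf : ∀ w, ∃ m : ℂ, f w = m • v)
    (hk : f v = k • v) : LinearMap.trace ℂ W f = k := by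
  obtain ⟨ψ, hψ⟩ := Module.Projective.exists_dual_eq_one ℂ hv
  have h : f = (ψ ∘ₗ f).smulRight v := by
    ext w
    obtain ⟨m, hm⟩ := hf w
    simp [hm, hψ]
  rw [h, LinearMap.trace_smulRight]
  simp [hk, hψ]

/-- `b_0(W) ⋯ b_{i-1}(W) = p_i(θ_t)` for `0 ≤ i ≤ d`; consequently `p_i(θ_t) ≠ 0`,
`b_i(W) = p_{i+1}(θ_t)/p_i(θ_t)` and `c_i(W) = x_i(W) p_{i-1}(θ_t)/p_i(θ_t)`. -/
theorem stmt11 (S : TSetup X) (M : TMod S) (hd : 0 < M.d) (b c : ℕ → ℂ)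
    (hbd : b M.d = 0) (hc0 : c 0 = 0) (hcd : c (M.d + 1) = 0)
    (hbc : ∀ u ∈ M.W.map (S.E M.t).mulVecLin, u ≠ 0 → ∀ i ≤ M.d,
      S.A *ᵥ (S.Estar (M.r + i) *ᵥ u) =
        (if i = 0 then 0 else b (i - 1) • (S.Estar (M.r + (i - 1)) *ᵥ u))
          + aW S M i • (S.Estar (M.r + i) *ᵥ u)
          + c (i + 1) • (S.Estar (M.r + (i + 1)) *ᵥ u)) :
    (∀ i ≤ M.d,
      ∏ h ∈ Finset.range i, b h = (pW S M i).eval ((S.θ M.t : ℂ))) ∧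
    (∀ i ≤ M.d, (pW S M i).eval ((S.θ M.t : ℂ)) ≠ 0) ∧
    (∀ i ≤ M.d - 1,
      b i = (pW S M (i + 1)).eval ((S.θ M.t : ℂ)) / (pW S M i).eval ((S.θ M.t : ℂ))) ∧
    (∀ i : ℕ, 1 ≤ i → i ≤ M.d →
      c i = xW S M i * (pW S M (i - 1)).eval ((S.θ M.t : ℂ))
        / (pW S M i).eval ((S.θ M.t : ℂ))) := by
  -- choose a nonzero vector of `E_t W`
  obtain ⟨u, huE, hu0⟩ : ∃ u ∈ M.W.map (S.E M.t).mulVecLin, u ≠ 0 :=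
    Submodule.exists_mem_ne_zero_of_ne_bot ((M.ht M.t).2 ⟨le_refl _, by omega⟩)
  have hbc' := hbc u huE hu0
  have htD : M.t ≤ S.D := by
    by_contra h
    apply (M.ht M.t).2 ⟨le_refl _, by omega⟩
    rw [S.hEzero _ (by omega)]
    simp
  have huW : u ∈ M.W := by
    obtain ⟨w, hw, rfl⟩ := huE
    exact M.hWinv _ (E_mem_T S _) w hw
  have hAu : S.A *ᵥ u = (S.θ M.t : ℂ) • u := by
    obtain ⟨w, hw, rfl⟩ := huE
    have := (idem_mem_adjoin S.D S.E S.θ S.A S.hEsum S.hEidem S.hθinj S.hAspec M.t htD).2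
    rw [Matrix.mulVecLin_apply, Matrix.mulVec_mulVec, this, Matrix.smul_mulVec]
  have hzero : ∀ w ∈ M.W, ∀ y, w y ≠ 0 → ∃ i ≤ M.d, S.G.dist S.x y = M.r + i := by
    intro w hw y hy
    have : M.W.map (S.Estar (S.G.dist S.x y)).mulVecLin ≠ ⊥ := by
      intro h
      have h1 : (S.Estar (S.G.dist S.x y)).mulVecLin w ∈
        M.W.map (S.Estar (S.G.dist S.x y)).mulVecLin := ⟨w, hw, rfl⟩
      rw [h, Submodule.mem_bot, Matrix.mulVecLin_apply] at h1
      have h2 := congrFun h1 y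
      rw [Estar_mulVec] at h2
      simp at h2
      exact hy h2
    have h3 := (M.hr _).1 this
    exact ⟨S.G.dist S.x y - M.r, by omega, by omega⟩
  have husum : u = ∑ i ∈ Finset.range (M.d + 1), S.Estar (M.r + i) *ᵥ u := by
    ext y
    rw [Finset.sum_apply]
    simp only [Estar_mulVec]
    by_cases hy : u y = 0
    · simp [hy]
    · obtain ⟨i, hi, hd⟩ := hzero u huW y hy
      rw [Finset.sum_eq_single i]
      · simp [hd]
      · intro j _ hj
        rw [if_neg (by omega)]
      · intro h
        simp at h
        omega
  -- invariant subspaces spanned by the tail of the components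
  have htail : ∀ k ≤ M.d, (k = 0 ∨ b (k - 1) = 0) →
      Submodule.span ℂ (Set.image (fun i => S.Estar i *ᵥ u) (Set.Icc (M.r + k) (M.r + M.d))) = ⊥ ∨
      Submodule.span ℂ (Set.image (fun i => S.Estar i *ᵥ u) (Set.Icc (M.r + k) (M.r + M.d))) = M.W := by
    intro k hk hk0
    apply M.hWirr
    · rw [Submodule.span_le]
      rintro _ ⟨i, hi, rfl⟩
      exact M.hWinv _ (Estar_mem_T S i) u huW
    · apply span_T_inv
      rintro i ⟨hi1, hi2⟩
      obtain ⟨j, rfl⟩ : ∃ j, i = M.r + j := ⟨i - M.r, by omega⟩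
      rw [hbc' j (by omega)]
      refine Submodule.add_mem _ (Submodule.add_mem _ ?_ ?_) ?_
      · split_ifs with hj
        · exact Submodule.zero_mem _
        · by_cases hjk : j = k
          · subst hjk
            rcases hk0 with h | h
            · exact absurd h hj
            · rw [h, zero_smul]
              exact Submodule.zero_mem _
          · exact Submodule.smul_mem _ _ (Submodule.subset_span ⟨_, ⟨by omega, by omega⟩, rfl⟩)
      · exact Submodule.smul_mem _ _ (Submodule.subset_span ⟨_, ⟨by omega, by omega⟩, rfl⟩)
      · by_cases hjd : j = M.d
        · rw [hjd, hcd, zero_smul]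
          exact Submodule.zero_mem _
        · exact Submodule.smul_mem _ _ (Submodule.subset_span ⟨_, ⟨by omega, by omega⟩, rfl⟩)
  have hspan : Submodule.span ℂ (Set.image (fun i => S.Estar i *ᵥ u) (Set.Icc M.r (M.r + M.d))) = M.W := by
    rcases htail 0 (by omega) (Or.inl rfl) with h | h
    · exfalso
      apply hu0
      rw [← Submodule.mem_bot ℂ, ← h]
      have h2 : ∑ i ∈ Finset.range (M.d + 1), S.Estar (M.r + i) *ᵥ u ∈
          Submodule.span ℂ (Set.image (fun i => S.Estar i *ᵥ u) (Set.Icc (M.r + 0) (M.r + M.d))) := by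
        refine Submodule.sum_mem _ (fun i hi => Submodule.subset_span ⟨_, ⟨by omega, ?_⟩, rfl⟩)
        simp at hi
        omega
      rwa [← husum] at h2
    · exact h
  -- each `E*_{r+i} W` is spanned by the `i`-th component
  have hEW : ∀ i, ∀ w ∈ M.W, ∃ m : ℂ, S.Estar i *ᵥ w = m • (S.Estar i *ᵥ u) := by
    intro i w hw
    rw [← hspan] at hw
    induction hw using Submodule.span_induction with
    | mem w hw =>
      obtain ⟨j, -, rfl⟩ := hw
      refine ⟨if j = i then 1 else 0, ?_⟩
      simp only [Estar_Estar]
      split_ifs with h <;> simp [h]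
    | zero => exact ⟨0, by simp⟩
    | add v w _ _ hv hw =>
      obtain ⟨m, hm⟩ := hv
      obtain ⟨n, hn⟩ := hw
      exact ⟨m + n, by rw [Matrix.mulVec_add, hm, hn, add_smul]⟩
    | smul k v _ hv =>
      obtain ⟨m, hm⟩ := hv
      exact ⟨k * m, by rw [Matrix.mulVec_smul, hm, smul_smul]⟩
  have hune : ∀ i ≤ M.d, S.Estar (M.r + i) *ᵥ u ≠ 0 := by
    intro i hi h
    apply (M.hr (M.r + i)).2 ⟨by omega, by omega⟩
    rw [Submodule.eq_bot_iff]
    rintro _ ⟨w, hw, rfl⟩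
    obtain ⟨m, hm⟩ := hEW (M.r + i) w hw
    rw [Matrix.mulVecLin_apply, hm, h, smul_zero]
  -- the `b_i` are nonzero
  have hbne : ∀ i < M.d, b i ≠ 0 := by
    intro i hi hb
    rcases htail (i + 1) (by omega) (Or.inr (by simpa using hb)) with h | h
    · apply hune M.d le_rfl
      rw [← Submodule.mem_bot ℂ, ← h]
      exact Submodule.subset_span ⟨_, ⟨by omega, by omega⟩, rfl⟩
    · apply hune 0 (by omega)
      have h1 : M.W ≤ LinearMap.ker (S.Estar (M.r + 0)).mulVecLin := by
        rw [← h, Submodule.span_le]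
        rintro _ ⟨j, ⟨hj1, hj2⟩, rfl⟩
        simp only [SetLike.mem_coe, LinearMap.mem_ker, Matrix.mulVecLin_apply, Estar_Estar]
        rw [if_neg (by omega)]
      exact h1 huW
  -- row sums
  have hrow : ∀ i ≤ M.d, c i + aW S M i + b i = (S.θ M.t : ℂ) := by
    intro i hi
    obtain ⟨y, hy⟩ := Function.ne_iff.1 (hune i hi)
    rw [Estar_mulVec] at hy
    simp only [Pi.zero_apply, ne_eq, ite_eq_right_iff, not_forall] at hy
    obtain ⟨hy1, hy2⟩ := hy
    have h1 : (S.A *ᵥ u) y = (S.θ M.t : ℂ) * u y := by rw [hAu]; simp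
    have hcomp : ∀ j, (S.Estar (M.r + j) *ᵥ u) y = if j = i then u y else 0 := by
      intro j
      rw [Estar_mulVec, hy1]
      by_cases h : j = i
      · simp [h]
      · rw [if_neg (by omega), if_neg h]
    have h2 : (S.A *ᵥ u) y = (b i + aW S M i + c i) * u y := by
      conv_lhs => rw [husum]
      rw [Matrix.mulVec_sum, Finset.sum_congr rfl
        (fun j hj => hbc' j (by simp at hj; omega))]
      rw [Finset.sum_add_distrib, Finset.sum_add_distrib, Finset.sum_range_succ']
      simp only [Pi.add_apply, Finset.sum_apply, Pi.smul_apply, hcomp, smul_eq_mul]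
      simp only [Nat.add_eq_zero_iff, one_ne_zero, and_false, if_false, Nat.add_sub_cancel,
        if_true, Pi.smul_apply, hcomp, smul_eq_mul, Pi.zero_apply, add_zero, mul_ite, mul_zero,
        Finset.sum_ite_eq', Finset.mem_range]
      have e1 : (if i < M.d then b i * u y else 0) = b i * u y := by
        split_ifs with h
        · rfl
        · have : i = M.d := by omega
          rw [this, hbd, zero_mul]
      have e3 : ∑ j ∈ Finset.range (M.d + 1), (if j + 1 = i then c (j + 1) * u y else 0)
          = c i * u y := by
        cases i with
        | zero => simp [hc0]
        | succ k =>
          simp only [Nat.add_right_cancel_iff, Finset.sum_ite_eq', Finset.mem_range]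
          rw [if_pos (by omega)]
      rw [e1, e3, if_pos (by omega)]
      ring
    have h3 := mul_right_cancel₀ hy2 (h2.symm.trans h1)
    rw [← h3]
    ring
  -- `x_i = b_{i-1} c_i`
  have hx : ∀ i < M.d, xW S M (i + 1) = b i * c (i + 1) := by
    intro i hi
    have hmem : S.Estar (M.r + (i + 1)) * S.A * S.Estar (M.r + i) * S.A ∈ S.T :=
      S.T.mul_mem (S.T.mul_mem (S.T.mul_mem (Estar_mem_T S _) (A_mem_T S)) (Estar_mem_T S _))
        (A_mem_T S)
    have hinv : ∀ w ∈ M.W, (S.Estar (M.r + (i + 1)) * S.A * S.Estar (M.r + i) *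
        S.A).mulVecLin w ∈ M.W := M.hWinv _ hmem
    rw [xW, if_neg (by omega), trW, actW]
    have e : M.r + (i + 1) - 1 = M.r + i := by omega
    rw [e, dif_pos hinv]
    have hvW : S.Estar (M.r + (i + 1)) *ᵥ u ∈ M.W := M.hWinv _ (Estar_mem_T S _) u huW
    refine trace_rank_one _ (⟨S.Estar (M.r + (i + 1)) *ᵥ u, hvW⟩ : M.W) ?_ _ ?_ ?_
    · intro h
      exact hune (i + 1) (by omega) (congrArg Subtype.val h)
    · rintro ⟨w, hw⟩
      obtain ⟨m, hm⟩ := hEW (M.r + (i + 1)) ((S.A * S.Estar (M.r + i) * S.A) *ᵥ w)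
        (M.hWinv _ (S.T.mul_mem (S.T.mul_mem (A_mem_T S) (Estar_mem_T S _)) (A_mem_T S)) w hw)
      refine ⟨m, Subtype.ext ?_⟩
      simp only [LinearMap.coe_restrict_apply, Matrix.mulVecLin_apply, Submodule.coe_smul]
      rw [← hm, Matrix.mulVec_mulVec]
      simp only [mul_assoc]
    · refine Subtype.ext ?_
      simp only [LinearMap.coe_restrict_apply, Matrix.mulVecLin_apply, Submodule.coe_smul]
      simp only [← Matrix.mulVec_mulVec]
      have g1 : S.Estar (M.r + i) *ᵥ (S.A *ᵥ (S.Estar (M.r + (i + 1)) *ᵥ u))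
          = b i • (S.Estar (M.r + i) *ᵥ u) := by
        rw [hbc' (i + 1) (by omega)]
        simp [Matrix.mulVec_add, Matrix.mulVec_smul, Estar_Estar, -Matrix.mulVec_mulVec]
        omega
      have g2 : S.Estar (M.r + (i + 1)) *ᵥ (S.A *ᵥ (S.Estar (M.r + i) *ᵥ u))
          = c (i + 1) • (S.Estar (M.r + (i + 1)) *ᵥ u) := by
        rw [hbc' i (by omega)]
        have : ¬ (i - 1 = i + 1) := by omega
        split_ifs <;> simp [Matrix.mulVec_add, Matrix.mulVec_smul, Estar_Estar, this,
          -Matrix.mulVec_mulVec]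
      rw [g1, Matrix.mulVec_smul, Matrix.mulVec_smul, g2, smul_smul]
  -- the product formula
  have hprod : ∀ i, (i ≤ M.d →
      ∏ h ∈ Finset.range i, b h = (pW S M i).eval ((S.θ M.t : ℂ))) := by
    intro i
    induction i using Nat.strong_induction_on with
    | _ i ih =>
      intro hi
      match i, ih, hi with
      | 0, _, _ => simp [pW]
      | 1, _, _ =>
        have := hrow 0 (by omega)
        rw [hc0] at this
        simp only [pW, Finset.prod_range_one, Polynomial.eval_sub, Polynomial.eval_X,
          Polynomial.eval_C]
        rw [← this]
        ring
      | n + 2, ih, hi =>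
        have h1 := ih (n + 1) (by omega) (by omega)
        have h0 := ih n (by omega) (by omega)
        have hr := hrow (n + 1) (by omega)
        simp only [pW, Polynomial.eval_sub, Polynomial.eval_mul, Polynomial.eval_X,
          Polynomial.eval_C]
        rw [← h1, ← h0, hx n (by omega), ← hr, Finset.prod_range_succ, Finset.prod_range_succ]
        ring
  have hpne : ∀ i ≤ M.d, (pW S M i).eval ((S.θ M.t : ℂ)) ≠ 0 := by
    intro i hi
    rw [← hprod i hi, Finset.prod_ne_zero_iff]
    intro j hj
    rw [Finset.mem_range] at hj
    exact hbne j (by omega)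
  refine ⟨hprod, hpne, ?_, ?_⟩
  · intro i hi
    rw [eq_div_iff (hpne i (by omega)), ← hprod i (by omega), ← hprod (i + 1) (by omega),
      Finset.prod_range_succ, mul_comm]
  · intro i hi1 hi
    obtain ⟨k, rfl⟩ : ∃ k, i = k + 1 := ⟨i - 1, by omega⟩
    rw [eq_div_iff (hpne _ hi), Nat.add_sub_cancel, ← hprod _ hi, ← hprod k (by omega),
      Finset.prod_range_succ, hx k (by omega)]
    ring
end
end
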